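/- arXiv:gr-qc/0005087 — 3 statements merged into one kernel-verified Lean document; each statement's English description precedes it below -/
import Mathlib

section
/- Let f, g : ℝ → ℂ be analytic at 0 (AnalyticAt ℝ at the point 0). If there exists ε > 0 such that f(v) + g(v) · log v = 0 for every v with 0 < v < ε, then f and g both vanish identically on some neighbourhood of 0. -/
/-!
If `g` did not vanish near `0`, it would have a finite order `n` there. Compare it with the order
of `f`. If `f` vanishes to order at least `n`, dividing by `v ^ n` gives `F + G log v = 0` with
`F`, `G` analytic and `G 0 ≠ 0`, so `log v` would stay bounded as `v → 0⁺`. If `f` has order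
`m < n`, dividing by `v ^ m` gives `F + G v log v = 0` with `F 0 ≠ 0`, contradicting
`v log v → 0`. Hence `g = 0` near `0`, so `f = 0` on the right of `0`, and isolation of zeros
gives `f = 0` near `0`.
-/

open Filter Topology

/-- With `G 0 ≠ 0`, the relation `F + G log v = 0` would force `log v` to converge at `0⁺`. -/
lemma not_add_mul_log {F G : ℝ → ℂ} (hF : ContinuousAt F 0) (hG : ContinuousAt G 0)
    (hG0 : G 0 ≠ 0) : ¬ ∀ᶠ v in 𝓝[>] (0 : ℝ), F v + G v * (Real.log v : ℂ) = 0 := by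
  intro h
  have hlim : Tendsto (fun v => -F v / G v) (𝓝[>] (0 : ℝ)) (𝓝 (-F 0 / G 0)) :=
    (hF.neg.div hG hG0).tendsto.mono_left nhdsWithin_le_nhds
  have hlog : Tendsto (fun v => (Real.log v : ℂ)) (𝓝[>] (0 : ℝ)) (𝓝 (-F 0 / G 0)) := by
    refine hlim.congr' ?_
    filter_upwards [h, (hG.eventually_ne hG0).filter_mono nhdsWithin_le_nhds] with v hv hv0
    rw [div_eq_iff hv0]
    linear_combination -hv
  have hre : Tendsto Real.log (𝓝[>] (0 : ℝ)) (𝓝 (-F 0 / G 0).re) :=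
    (Complex.continuous_re.tendsto _).comp hlog
  exact not_tendsto_nhds_of_tendsto_atBot Real.tendsto_log_nhdsGT_zero _ hre

/-- Since `v log v → 0` at `0⁺`, the relation `F + G v log v = 0` forces `F 0 = 0`. -/
lemma eq_zero_of_add_mul_log {F G : ℝ → ℂ} (hF : ContinuousAt F 0) (hG : ContinuousAt G 0)
    (h : ∀ᶠ v in 𝓝[>] (0 : ℝ), F v + G v * ((Real.log v * v : ℝ) : ℂ) = 0) : F 0 = 0 := by
  have hvlog : Tendsto (fun v : ℝ => Real.log v * v) (𝓝[>] 0) (𝓝 0) := by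
    simpa using tendsto_log_mul_rpow_nhdsGT_zero one_pos
  have hlim := (hF.tendsto.mono_left (nhdsWithin_le_nhds (s := Set.Ioi 0))).add
    ((hG.tendsto.mono_left nhdsWithin_le_nhds).mul
      ((Complex.continuous_ofReal.tendsto 0).comp hvlog))
  have h0 := tendsto_nhds_unique (hlim.congr' h) tendsto_const_nhds
  simpa using h0

/-- Uniqueness of the decomposition `φ = φ⁽⁰⁾ + φ⁽¹⁾ log v` of a minimally
polyhomogeneous field: `1` and `log v` are independent over germs of real-analytic
functions at `0`.  If `f + g · log` vanishes on an interval `(0, ε)` with `f, g`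
analytic at `0`, then `f` and `g` vanish identically near `0`. -/
theorem log_independent_of_analytic (f g : ℝ → ℂ)
    (hf : AnalyticAt ℝ f 0) (hg : AnalyticAt ℝ g 0)
    (h : ∃ ε > (0 : ℝ), ∀ v : ℝ, 0 < v → v < ε →
      f v + g v * (Real.log v : ℂ) = 0) :
    ∀ᶠ x in nhds (0 : ℝ), f x = 0 ∧ g x = 0 := by
  obtain ⟨ε, hε, h⟩ := h
  have hev : ∀ᶠ v in 𝓝[>] (0 : ℝ), 0 < v ∧ f v + g v * (Real.log v : ℂ) = 0 := by
    filter_upwards [Ioo_mem_nhdsGT hε] with v hv using ⟨hv.1, h v hv.1 hv.2⟩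
  have hg_zero : ∀ᶠ x in 𝓝 (0 : ℝ), g x = 0 := by
    by_contra hne
    rw [← analyticOrderAt_eq_top] at hne
    obtain ⟨n, hn⟩ := ENat.ne_top_iff_exists.mp hne
    rcases le_or_gt (n : ℕ∞) (analyticOrderAt f 0) with hle | hlt
    · obtain ⟨F, hF, hfF⟩ := (natCast_le_analyticOrderAt hf).mp hle
      obtain ⟨G, hG, hG0, hgG⟩ := hg.analyticOrderAt_eq_natCast.mp hn.symm
      refine not_add_mul_log hF.continuousAt hG.continuousAt hG0 ?_
      filter_upwards [hev, hfF.filter_mono nhdsWithin_le_nhds,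
        hgG.filter_mono nhdsWithin_le_nhds] with v ⟨hv, hrel⟩ hfv hgv
      have hvn : (v : ℂ) ^ n ≠ 0 := pow_ne_zero _ (by exact_mod_cast hv.ne')
      simp only [hfv, hgv, sub_zero, Complex.real_smul, Complex.ofReal_pow] at hrel
      refine (mul_eq_zero.mp ?_).resolve_left hvn
      linear_combination hrel
    · obtain ⟨m, hm⟩ := ENat.ne_top_iff_exists.mp hlt.ne_top
      have hmn : ((m + 1 : ℕ) : ℕ∞) ≤ analyticOrderAt g 0 := by
        rw [← hm] at hlt
        rw [← hn]
        exact_mod_cast Nat.succ_le_of_lt (by exact_mod_cast hlt)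
      obtain ⟨F, hF, hF0, hfF⟩ := hf.analyticOrderAt_eq_natCast.mp hm.symm
      obtain ⟨G, hG, hgG⟩ := (natCast_le_analyticOrderAt hg).mp hmn
      refine hF0 (eq_zero_of_add_mul_log hF.continuousAt hG.continuousAt ?_)
      filter_upwards [hev, hfF.filter_mono nhdsWithin_le_nhds,
        hgG.filter_mono nhdsWithin_le_nhds] with v ⟨hv, hrel⟩ hfv hgv
      have hvm : (v : ℂ) ^ m ≠ 0 := pow_ne_zero _ (by exact_mod_cast hv.ne')
      simp only [hfv, hgv, sub_zero, Complex.real_smul, Complex.ofReal_pow] at hrel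
      refine (mul_eq_zero.mp ?_).resolve_left hvm
      push_cast
      linear_combination hrel
  have hf_right : ∀ᶠ v in 𝓝[>] (0 : ℝ), f v = 0 := by
    filter_upwards [hev, hg_zero.filter_mono nhdsWithin_le_nhds] with v ⟨_, hrel⟩ hgv
    simpa [hgv] using hrel
  have hf_zero : ∀ᶠ x in 𝓝 (0 : ℝ), f x = 0 :=
    hf.frequently_zero_iff_eventually_zero.mp
      (hf_right.frequently.filter_mono (nhdsWithin_mono _ fun _ hx => ne_of_gt hx))
  exact hf_zero.and hg_zero
end

section
/- Let (a_n)_{n ∈ ℕ} and (b_n)_{n ∈ ℕ} be sequences of complex numbers and let 0 < r < 1. Suppose that for every v with 0 < v < r the families (a_n v^n)_n and (b_n v^n)_n are summable and that (∑_n a_n v^n) + (log v) · (∑_n b_n v^n) = 0. Then a_n = 0 and b_n = 0 for every n. -/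
/-!
A power series that is summable on `(0, r)` is continuous up to `v = 0`, so
`A v = ∑ aₙ vⁿ → a₀` and `B v = ∑ bₙ vⁿ → b₀` as `v → 0⁺`. From `A + log · B = 0` and
`log v → -∞` we get `B = -A / log → 0`, hence `b₀ = 0`. Then `B v = v · B₁ v` with `B₁` the
shifted series, which is bounded near `0`, so `A v = -(v log v) B₁ v → 0` and `a₀ = 0`.
Dividing the relation by `v` shows that the shifted sequences satisfy the same hypothesis,
and induction on the index finishes the proof.
-/

open Filter Topology

namespace PolyhomogeneousUniqueness

/-- A power series summable on `(0, r)` tends to its constant coefficient at `0⁺`. -/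
lemma tendsto_constant_coeff (a : ℕ → ℂ) (r : ℝ) (hr0 : 0 < r)
    (h : ∀ v : ℝ, 0 < v → v < r → Summable (fun n : ℕ => a n * (v : ℂ) ^ n)) :
    Tendsto (fun v : ℝ => ∑' n : ℕ, a n * (v : ℂ) ^ n) (𝓝[>] 0) (𝓝 (a 0)) := by
  have h_lim : ∑' n : ℕ, a n * ((0 : ℝ) : ℂ) ^ n = a 0 := by
    rw [tsum_eq_single 0]
    · simp
    · intro n hn
      simp [hn]
  rw [← h_lim]
  -- Tannery's theorem on `(0, r / 2)`, dominated by the terms at `v = r / 2`.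
  refine tendsto_tsum_of_dominated_convergence
    (bound := fun n => ‖a n * ((r / 2 : ℝ) : ℂ) ^ n‖)
    (h (r / 2) (by linarith) (by linarith)).norm ?_ ?_
  · intro n
    have hc : Continuous (fun v : ℝ => a n * (v : ℂ) ^ n) := by fun_prop
    exact (hc.tendsto 0).mono_left nhdsWithin_le_nhds
  · filter_upwards [Ioo_mem_nhdsGT (show (0 : ℝ) < r / 2 by linarith)] with v hv n
    have h1 := hv.1
    have h2 := hv.2
    simp only [norm_mul, norm_pow, Complex.norm_real, Real.norm_eq_abs]
    rw [abs_of_pos h1, abs_of_pos (h1.trans h2)]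
    gcongr

lemma summable_shift {a : ℕ → ℂ} {v : ℝ} (hv : 0 < v)
    (h : Summable (fun n : ℕ => a n * (v : ℂ) ^ n)) :
    Summable (fun n : ℕ => a (n + 1) * (v : ℂ) ^ n) := by
  have hv' : (v : ℂ) ≠ 0 := by exact_mod_cast hv.ne'
  refine (((summable_nat_add_iff 1).2 h).mul_right (v : ℂ)⁻¹).congr fun n => ?_
  rw [pow_succ]
  field_simp

lemma tsum_eq_mul_shift {a : ℕ → ℂ} {v : ℝ} (ha : a 0 = 0)
    (h : Summable (fun n : ℕ => a n * (v : ℂ) ^ n)) :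
    ∑' n : ℕ, a n * (v : ℂ) ^ n = v * ∑' n : ℕ, a (n + 1) * (v : ℂ) ^ n := by
  rw [h.tsum_eq_zero_add, ha, zero_mul, zero_add, ← tsum_mul_left]
  refine tsum_congr fun n => ?_
  ring

/-- The hypothesis on `(0, r)` forces both leading coefficients to vanish. -/
lemma leading_coeff_eq_zero (a b : ℕ → ℂ) (r : ℝ) (hr0 : 0 < r)
    (h : ∀ v : ℝ, 0 < v → v < r →
      Summable (fun n : ℕ => a n * (v : ℂ) ^ n) ∧
      Summable (fun n : ℕ => b n * (v : ℂ) ^ n) ∧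
      (∑' n : ℕ, a n * (v : ℂ) ^ n) +
        (Real.log v : ℂ) * (∑' n : ℕ, b n * (v : ℂ) ^ n) = 0) :
    a 0 = 0 ∧ b 0 = 0 := by
  have hA := tendsto_constant_coeff a r hr0 fun v h1 h2 => (h v h1 h2).1
  have hB := tendsto_constant_coeff b r hr0 fun v h1 h2 => (h v h1 h2).2.1
  have hb : b 0 = 0 := by
    have h_inv : Tendsto (fun v : ℝ => (((Real.log v)⁻¹ : ℝ) : ℂ)) (𝓝[>] 0) (𝓝 0) := by
      exact_mod_cast (Complex.continuous_ofReal.tendsto 0).comp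
        (tendsto_inv_atBot_zero.comp Real.tendsto_log_nhdsGT_zero)
    have h_prod := (h_inv.mul hA).neg
    rw [zero_mul, neg_zero] at h_prod
    refine tendsto_nhds_unique hB (h_prod.congr' ?_)
    -- Restricting to `v < 1` as well keeps `log v` away from `0`.
    filter_upwards [Ioo_mem_nhdsGT (show (0 : ℝ) < min r 1 by positivity)] with v hv
    have hvr : v < r := hv.2.trans_le (min_le_left _ _)
    have hv1 : v < 1 := hv.2.trans_le (min_le_right _ _)
    have h_log : (Real.log v : ℂ) ≠ 0 := by exact_mod_cast (Real.log_neg hv.1 hv1).ne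
    rw [eq_neg_of_add_eq_zero_left (h v hv.1 hvr).2.2, Complex.ofReal_inv]
    field_simp
  refine ⟨?_, hb⟩
  have hB' := tendsto_constant_coeff (fun n => b (n + 1)) r hr0
    fun v h1 h2 => summable_shift h1 (h v h1 h2).2.1
  have h_vlog : Tendsto (fun v : ℝ => ((Real.log v * v : ℝ) : ℂ)) (𝓝[>] 0) (𝓝 0) := by
    have h_real : Tendsto (fun v : ℝ => Real.log v * v) (𝓝[>] 0) (𝓝 0) := by
      simpa using tendsto_log_mul_rpow_nhdsGT_zero zero_lt_one
    exact_mod_cast (Complex.continuous_ofReal.tendsto 0).comp h_real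
  have h_prod := (h_vlog.mul hB').neg
  rw [zero_mul, neg_zero] at h_prod
  refine tendsto_nhds_unique hA (h_prod.congr' ?_)
  filter_upwards [Ioo_mem_nhdsGT hr0] with v hv
  obtain ⟨-, h_sum, h_eq⟩ := h v hv.1 hv.2
  rw [eq_neg_of_add_eq_zero_left h_eq, tsum_eq_mul_shift hb h_sum, Complex.ofReal_mul]
  ring

end PolyhomogeneousUniqueness


/-- Uniqueness of the coefficients of a minimally polyhomogeneous expansion:
if `∑ aₙ vⁿ + (log v) · ∑ bₙ vⁿ = 0` for all `v ∈ (0, r)` (the series being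
summable there), then all the coefficients `aₙ`, `bₙ` vanish. -/
theorem polyhomogeneous_coefficients_unique (a b : ℕ → ℂ) (r : ℝ)
    (hr0 : 0 < r) (hr1 : r < 1)
    (h : ∀ v : ℝ, 0 < v → v < r →
      Summable (fun n : ℕ => a n * (v : ℂ) ^ n) ∧
      Summable (fun n : ℕ => b n * (v : ℂ) ^ n) ∧
      (∑' n : ℕ, a n * (v : ℂ) ^ n) +
        (Real.log v : ℂ) * (∑' n : ℕ, b n * (v : ℂ) ^ n) = 0) :
    ∀ n : ℕ, a n = 0 ∧ b n = 0 := by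

  intro n
  induction n generalizing a b with
  | zero => exact PolyhomogeneousUniqueness.leading_coeff_eq_zero a b r hr0 h
  | succ n ih =>
    obtain ⟨ha, hb⟩ := PolyhomogeneousUniqueness.leading_coeff_eq_zero a b r hr0 h
    refine ih (fun n => a (n + 1)) (fun n => b (n + 1)) fun v hv hvr => ?_
    obtain ⟨h_sa, h_sb, h_eq⟩ := h v hv hvr
    refine ⟨PolyhomogeneousUniqueness.summable_shift hv h_sa,
      PolyhomogeneousUniqueness.summable_shift hv h_sb, ?_⟩
    rw [PolyhomogeneousUniqueness.tsum_eq_mul_shift ha h_sa,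
      PolyhomogeneousUniqueness.tsum_eq_mul_shift hb h_sb] at h_eq
    have hv' : (v : ℂ) ≠ 0 := by exact_mod_cast hv.ne'
    refine (mul_eq_zero.1 ?_).resolve_left hv'
    linear_combination h_eq
end

section
/- Let I ⊆ ℝ be an open interval, let δ > 0, let c : I → ℂ, R : I × (0, δ) → ℂ, and define F(u, v) = c(u) · v⁻¹ + R(u, v). Suppose there exist functions F_u, R_u : I × (0, δ) → ℂ and a constant M ≥ 0 such that for every v ∈ (0, δ) the maps u ↦ F(u, v) and u ↦ R(u, v) are differentiable on I with derivatives F_u(·, v) and R_u(·, v), and ‖F_u(u, v)‖ ≤ M and ‖R_u(u, v)‖ ≤ M for all u ∈ I and v ∈ (0, δ). Then c is constant on I. -/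
/-! For fixed `v`, the difference `F(·,v) - R(·,v) = c · v⁻¹` has derivative bounded by `2M`, so the
mean value inequality on the convex interval gives `‖c u₁ - c u₂‖ ≤ 2M v |u₁ - u₂|`. The left side
does not depend on `v`, and letting `v → 0⁺` shows that it vanishes. In particular no
differentiability of `c` has to be established. -/

/-- The coefficient of the non-regular pole term is a constant of motion:
if `F(u,v) = c(u)·v⁻¹ + R(u,v)` on an open interval `I` (in the retarded time `u`)
times `(0, δ)` (in the advanced time `v`), and both `F` and `R` are differentiable
in `u` with derivatives uniformly bounded by `M`, then `c` is constant on `I`. -/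
theorem pole_coefficient_constant (α β : ℝ) (hαβ : α < β) (δ : ℝ) (hδ : 0 < δ)
    (c : ℝ → ℂ) (R F F_u R_u : ℝ → ℝ → ℂ) (M : ℝ) (hM : 0 ≤ M)
    (hF : ∀ u ∈ Set.Ioo α β, ∀ v ∈ Set.Ioo 0 δ,
      F u v = c u * (v : ℂ)⁻¹ + R u v)
    (hFdiff : ∀ v ∈ Set.Ioo 0 δ, ∀ u ∈ Set.Ioo α β,
      HasDerivAt (fun u' => F u' v) (F_u u v) u)
    (hRdiff : ∀ v ∈ Set.Ioo 0 δ, ∀ u ∈ Set.Ioo α β,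
      HasDerivAt (fun u' => R u' v) (R_u u v) u)
    (hFbound : ∀ u ∈ Set.Ioo α β, ∀ v ∈ Set.Ioo 0 δ, ‖F_u u v‖ ≤ M)
    (hRbound : ∀ u ∈ Set.Ioo α β, ∀ v ∈ Set.Ioo 0 δ, ‖R_u u v‖ ≤ M) :
    ∀ u₁ ∈ Set.Ioo α β, ∀ u₂ ∈ Set.Ioo α β, c u₁ = c u₂ := by
  intro u₁ h₁ u₂ h₂
  have key : ∀ v ∈ Set.Ioo 0 δ, ‖c u₁ - c u₂‖ ≤ v * ((M + M) * ‖u₁ - u₂‖) := by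
    intro v hv
    have hv0 : (v : ℂ) ≠ 0 := by exact_mod_cast hv.1.ne'
    have hmv := (convex_Ioo α β).norm_image_sub_le_of_norm_hasDerivWithin_le
      (f := fun u => F u v - R u v) (f' := fun u => F_u u v - R_u u v) (C := M + M)
      (fun u hu => ((hFdiff v hv u hu).sub (hRdiff v hv u hu)).hasDerivWithinAt)
      (fun u hu => (norm_sub_le _ _).trans (add_le_add (hFbound u hu v hv) (hRbound u hu v hv)))
      h₂ h₁
    have hc : c u₁ - c u₂ = v * ((F u₁ v - R u₁ v) - (F u₂ v - R u₂ v)) := by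
      rw [hF u₁ h₁ v hv, hF u₂ h₂ v hv]
      field_simp
      ring
    rw [hc, norm_mul, Complex.norm_real, Real.norm_of_nonneg hv.1.le]
    exact mul_le_mul_of_nonneg_left hmv hv.1.le
  have hlim : Filter.Tendsto (fun v : ℝ => v * ((M + M) * ‖u₁ - u₂‖))
      (nhdsWithin 0 (Set.Ioi 0)) (nhds 0) := by
    have h : Continuous fun v : ℝ => v * ((M + M) * ‖u₁ - u₂‖) := by fun_prop
    simpa using (h.tendsto 0).mono_left nhdsWithin_le_nhds
  have hle : ‖c u₁ - c u₂‖ ≤ 0 :=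
    ge_of_tendsto hlim (Filter.eventually_of_mem (Ioo_mem_nhdsGT hδ) key)
  exact sub_eq_zero.mp (norm_le_zero_iff.mp hle)
end
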